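/- Let p be a prime and S a commutative ring of characteristic p. Let f ∈ S[x,y] be a homogeneous polynomial of degree d, and set b := d mod p. Let D : S[x,y] → S[x,y] be the operator D(g) = x^p·∂g/∂x + y^p·∂g/∂y. Then (x^p·y − x·y^p)^{b+1} divides D^{b+1}(f), the (b+1)-fold iterate of D applied to f. -/

import Mathlib

open MvPolynomial

/-!
Write `x`, `y` for the variables and let `f` satisfy Euler's identity `x f_x + y f_y = n f`.
Every partial derivative of order `n` satisfies `x g_x + y g_y = 0`, so the `(n+1)`-st partial
derivatives of `f` form a chain of syzygies of `(x, y)`. As `x, y` is a regular sequence over any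
ring, the chain has a common quotient `q` with `∂_x^i ∂_y^j f = y^i (-x)^j q` for `i + j = n + 1`.
Hence `(a ∂_x + c ∂_y)^(n+1) f = (a y - c x)^(n+1) q` whenever `a` and `c` are constants for both
partial derivatives, as `x^p` and `y^p` are in characteristic `p`.
-/

section Derivations

variable {R A : Type*} [CommSemiring R] [CommSemiring A] [Algebra R A]

theorem derivation_pow_eq_zero {M : Type*} [AddCommMonoid M] [Module A M] [Module R M]
    (D : Derivation R A M) {q : ℕ} (hq : (q : R) = 0) (a : A) : D (a ^ q) = 0 := by
  rw [D.leibniz_pow, ← Nat.cast_smul_eq_nsmul R, hq, zero_smul]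

theorem iterate_derivation_mul_of_eq_zero (D : Derivation R A A) {a : A} (ha : D a = 0) (n : ℕ)
    (g : A) : D^[n] (a * g) = a * D^[n] g := by
  have commute_mul : Function.Commute D (a * ·) := fun g ↦ by
    rw [D.leibniz, ha, smul_zero, add_zero, smul_eq_mul]
  exact commute_mul.iterate_left n g

end Derivations

section PartialDerivatives

variable {R σ : Type*} [CommRing R]

theorem pderiv_commute (i j : σ) :
    Function.Commute (pderiv (R := R) i) (pderiv (R := R) j) := by
  classical
  have bracket_eq_zero : ⁅pderiv (R := R) i, pderiv (R := R) j⁆ = 0 := by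
    refine derivation_ext fun k ↦ ?_
    rw [Derivation.commutator_apply, pderiv_X, pderiv_X]
    simp [Pi.single_apply, apply_ite]
  intro f
  rw [← sub_eq_zero, ← Derivation.commutator_apply, bracket_eq_zero, Derivation.zero_apply]

variable [Fintype σ] {c : R} {f : MvPolynomial σ R}

theorem sum_X_mul_pderiv_pderiv (hf : ∑ j, X j * pderiv j f = c • f) (i : σ) :
    ∑ j, X j * pderiv j (pderiv i f) = (c - 1) • pderiv i f := by
  classical
  have diff_euler : ∑ j, X j * pderiv j (pderiv i f) + pderiv i f = c • pderiv i f := by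
    simpa [pderiv_X, Pi.single_apply, Finset.sum_add_distrib, (pderiv_commute i _).eq]
      using congrArg (pderiv i) hf
  rw [sub_smul, one_smul, ← diff_euler, add_sub_cancel_right]

theorem sum_X_mul_pderiv_iterate_pderiv (hf : ∑ j, X j * pderiv j f = c • f) (i : σ) (k : ℕ) :
    ∑ j, X j * pderiv j ((pderiv i)^[k] f) = (c - k) • (pderiv i)^[k] f := by
  induction k with
  | zero => simpa using hf
  | succ k ih =>
    rw [Function.iterate_succ_apply', sum_X_mul_pderiv_pderiv ih, Nat.cast_succ, sub_sub]

end PartialDerivatives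

section Syzygies

variable {σ : Type*} {s t : σ}

theorem X_pow_dvd_of_dvd_X_pow_mul {R : Type*} [CommSemiring R] (hst : s ≠ t) {m n : ℕ}
    {f : MvPolynomial σ R} (h : X s ^ m ∣ X t ^ n * f) : X s ^ m ∣ f := by
  classical
  obtain ⟨g, hg⟩ := h
  rw [X_pow_eq_monomial, X_pow_eq_monomial] at hg
  rw [X_pow_eq_monomial, monomial_one_dvd_iff_modMonomial_eq_zero]
  ext e
  rw [coeff_zero]
  by_cases he : Finsupp.single s m ≤ e
  · exact coeff_modMonomial_of_le f he
  have he' : ¬ Finsupp.single s m ≤ Finsupp.single t n + e := by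
    simpa [Finsupp.single_le_iff, hst] using he
  calc coeff e (f.modMonomial (Finsupp.single s m))
      = coeff e f := coeff_modMonomial_of_not_le f he
    _ = coeff (Finsupp.single t n + e) (monomial (Finsupp.single t n) 1 * f) := by
      rw [coeff_monomial_mul, one_mul]
    _ = 0 := by rw [hg, coeff_monomial_mul', if_neg he']

theorem exists_eq_X_pow_mul_of_syzygies {R : Type*} [CommRing R] (hst : s ≠ t) {N : ℕ}
    {g : ℕ → ℕ → MvPolynomial σ R}
    (hg : ∀ i j, i + j + 1 = N → X s * g (i + 1) j + X t * g i (j + 1) = 0) :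
    ∃ q, ∀ i j, i + j = N → g i j = X t ^ i * (-X s) ^ j * q := by
  have X_pow_mul_eq : ∀ j i, i + j = N → X t ^ j * g i j = (-X s) ^ j * g N 0 := by
    intro j
    induction j with
    | zero => rintro i rfl; simp
    | succ j ih =>
      intro i hij
      linear_combination X t ^ j * hg i j hij - X s * ih (i + 1) (by lia)
  have X_pow_dvd : X t ^ N ∣ g N 0 := by
    have X_pow_dvd_neg_mul : X t ^ N ∣ (-X s) ^ N * g N 0 :=
      ⟨g 0 N, (X_pow_mul_eq N 0 (zero_add N)).symm⟩
    rw [neg_pow, mul_assoc, (isUnit_one.neg.pow N).dvd_mul_left] at X_pow_dvd_neg_mul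
    exact X_pow_dvd_of_dvd_X_pow_mul hst.symm X_pow_dvd_neg_mul
  obtain ⟨q, hq⟩ := X_pow_dvd
  refine ⟨q, ?_⟩
  rintro i j rfl
  apply (isRegular_X_pow (n := t) j).left
  change X t ^ j * g i j = X t ^ j * (X t ^ i * (-X s) ^ j * q)
  linear_combination X_pow_mul_eq j i rfl + (-X s) ^ j * hq

end Syzygies

section DirectionalDerivatives

variable {R : Type*} [CommRing R] {a c f : MvPolynomial (Fin 2) R}

/-- The derivation `a ∂_x + c ∂_y` of `R[x, y]`. Serre's theta operator is the case `a = x^p`,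
`c = y^p`. -/
noncomputable def directionalDeriv (a c : MvPolynomial (Fin 2) R) :
    Derivation R (MvPolynomial (Fin 2) R) (MvPolynomial (Fin 2) R) :=
  a • pderiv 0 + c • pderiv 1

theorem directionalDeriv_apply (a c g : MvPolynomial (Fin 2) R) :
    directionalDeriv a c g = a * pderiv 0 g + c * pderiv 1 g :=
  rfl

theorem directionalDeriv_eq_zero {g : MvPolynomial (Fin 2) R} (hg : ∀ i, pderiv i g = 0) :
    directionalDeriv a c g = 0 := by
  rw [directionalDeriv_apply, hg, hg, mul_zero, mul_zero, add_zero]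

theorem exists_iterate_pderiv_eq {n : ℕ} (hf : ∑ i, X i * pderiv i f = (n : R) • f) :
    ∃ q, ∀ i j, i + j = n + 1 →
      (pderiv 0)^[i] ((pderiv 1)^[j] f) = X 1 ^ i * (-X 0) ^ j * q := by
  refine exists_eq_X_pow_mul_of_syzygies zero_ne_one fun i j hij ↦ ?_
  have weight_eq_zero : (n - j - i : R) = 0 := by
    rw [← Nat.succ_injective hij, Nat.cast_add]
    ring
  have euler :=
    sum_X_mul_pderiv_iterate_pderiv (sum_X_mul_pderiv_iterate_pderiv hf 1 j) 0 i
  rw [weight_eq_zero, zero_smul, Fin.sum_univ_two] at euler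
  rwa [Function.iterate_succ_apply', Function.iterate_succ_apply',
    ((pderiv_commute 0 1).iterate_left i).eq]

theorem iterate_directionalDeriv_iterate_pderiv (ha : ∀ i, pderiv i a = 0)
    (hc : ∀ i, pderiv i c = 0) {N : ℕ} {q : MvPolynomial (Fin 2) R}
    (hq : ∀ i j, i + j = N → (pderiv 0)^[i] ((pderiv 1)^[j] f) = X 1 ^ i * (-X 0) ^ j * q)
    (k i j : ℕ) (hijk : i + j + k = N) :
    (directionalDeriv a c)^[k] ((pderiv 0)^[i] ((pderiv 1)^[j] f)) =
      (a * X 1 - c * X 0) ^ k * (X 1 ^ i * (-X 0) ^ j * q) := by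
  induction k generalizing i j with
  | zero =>
    rw [Function.iterate_zero_apply, pow_zero, one_mul]
    exact hq i j hijk
  | succ k ih =>
    have hx := ih (i + 1) j (by lia)
    have hy := ih i (j + 1) (by lia)
    rw [Function.iterate_succ_apply'] at hx
    rw [Function.iterate_succ_apply', ((pderiv_commute 0 1).iterate_left i).eq] at hy
    rw [Function.iterate_succ_apply, directionalDeriv_apply, iterate_map_add,
      iterate_derivation_mul_of_eq_zero _ (directionalDeriv_eq_zero ha),
      iterate_derivation_mul_of_eq_zero _ (directionalDeriv_eq_zero hc), hx, hy]
    ring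

theorem pow_dvd_iterate_directionalDeriv (ha : ∀ i, pderiv i a = 0) (hc : ∀ i, pderiv i c = 0)
    {n : ℕ} (hf : ∑ i, X i * pderiv i f = (n : R) • f) :
    (a * X 1 - c * X 0) ^ (n + 1) ∣ (directionalDeriv a c)^[n + 1] f := by
  obtain ⟨q, hq⟩ := exists_iterate_pderiv_eq hf
  exact ⟨_, iterate_directionalDeriv_iterate_pderiv ha hc hq (n + 1) 0 0 (by lia)⟩

end DirectionalDerivatives

theorem stmt_18_general {S : Type*} [CommRing S] {q : ℕ} (hq : (q : S) = 0) {n : ℕ}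
    {f : MvPolynomial (Fin 2) S} (hf : ∑ i, X i * pderiv i f = (n : S) • f) :
    (X 0 ^ q * X 1 - X 0 * X 1 ^ q) ^ (n + 1) ∣
      (fun g : MvPolynomial (Fin 2) S =>
        X 0 ^ q * pderiv 0 g + X 1 ^ q * pderiv 1 g)^[n + 1] f := by
  rw [mul_comm (X 0) (X 1 ^ q)]
  exact pow_dvd_iterate_directionalDeriv (fun i ↦ derivation_pow_eq_zero (pderiv i) hq _)
    (fun i ↦ derivation_pow_eq_zero (pderiv i) hq _) hf

/-- Let `p` be a prime and `S` a commutative ring of characteristic `p`.  Let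
`f ∈ S[x,y]` be a homogeneous polynomial of degree `d` and set `b := d % p`.  Let
`D g = x^p·∂g/∂x + y^p·∂g/∂y` be Serre's operator.  Then Dickson's invariant to the
power `b+1`, i.e. `(x^p·y − x·y^p)^{b+1}`, divides `D^{b+1} f`. -/
theorem stmt_18 (p : ℕ) (hp : p.Prime) (S : Type*) [CommRing S] [CharP S p]
    (d : ℕ) (f : MvPolynomial (Fin 2) S) (hf : f.IsHomogeneous d) :
    (X 0 ^ p * X 1 - X 0 * X 1 ^ p) ^ (d % p + 1) ∣
      (fun g : MvPolynomial (Fin 2) S =>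
        X 0 ^ p * pderiv 0 g + X 1 ^ p * pderiv 1 g)^[d % p + 1] f :=
  stmt_18_general (CharP.cast_eq_zero S p) <| by
    rw [hf.sum_X_mul_pderiv, ← CharP.cast_eq_mod, Nat.cast_smul_eq_nsmul]
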